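/- arXiv:1812.11363 — 2 statements merged into one kernel-verified Lean document; each statement's English description precedes it below -/
import Mathlib

section
/- Every element of order 2 (or 1) in S₆ acting on the set Q of partitions of {1,...,6} into two blocks of size 3 has at least one fixed point. -/
open Pointwise

/-- A partition of {1,...,6} into two (unordered) blocks of size 3. -/
def IsTriplePartition (q : Finset (Finset (Fin 6))) : Prop :=
  q.card = 2 ∧ (∀ b ∈ q, b.card = 3) ∧ q.sup id = Finset.univ

/-!
Blocks are built one orbit at a time. If the involution fixes a point, it has invariant sets of
every size: a set grows by a fixed point outside it or, failing that, by exchanging a fixed point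
inside it for an orbit of size two outside it. If it fixes no point, choosing one point from each
orbit gives a set that it exchanges with the complement. In both cases a set `b` of half the total
size satisfies `g • b = b` or `g • b = bᶜ`, so that the partition `{b, bᶜ}` is fixed.
-/

section GroupAction

variable {G α : Type*} [Group G] [MulAction G α] {g : G}

theorem smul_smul_of_sq_eq_one (hg : g ^ 2 = 1) (x : α) : g • g • x = x := by
  rw [smul_smul, ← sq, hg, one_smul]

variable [DecidableEq α]

theorem mem_smul_finset_iff_of_sq_eq_one (hg : g ^ 2 = 1) {s : Finset α} {x : α} :
    x ∈ g • s ↔ g • x ∈ s := by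
  rw [← Finset.smul_mem_smul_finset_iff g, smul_smul_of_sq_eq_one hg]

variable [Fintype α]

theorem smul_finset_compl (g : G) (s : Finset α) : g • sᶜ = (g • s)ᶜ := by
  simp only [Finset.compl_eq_univ_sdiff, Finset.smul_finset_sdiff, Finset.smul_finset_univ]

theorem exists_card_eq_succ_smul_eq (hg : g ^ 2 = 1) {a : α} (ha : g • a = a) {b : Finset α}
    (hb : g • b = b) (hcard : b.card < Fintype.card α) :
    ∃ c : Finset α, c.card = b.card + 1 ∧ g • c = c := by
  by_cases hfixed : ∃ x ∉ b, g • x = x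
  · obtain ⟨x, hxb, hx⟩ := hfixed
    exact ⟨insert x b, Finset.card_insert_of_notMem hxb, by
      rw [Finset.smul_finset_insert, hx, hb]⟩
  · push Not at hfixed
    have hab : a ∈ b := by_contra fun hab => hfixed a hab ha
    obtain ⟨x, -, hxb⟩ := Finset.exists_mem_notMem_of_card_lt_card (t := Finset.univ) hcard
    have hgxb : g • x ∉ b := by rwa [← mem_smul_finset_iff_of_sq_eq_one hg, hb]
    have hx : x ∉ insert (g • x) b := by
      simpa only [Finset.mem_insert, not_or] using ⟨(hfixed x hxb).symm, hxb⟩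
    refine ⟨(insert x (insert (g • x) b)) \ {a}, ?_, ?_⟩
    · rw [Finset.card_sdiff_of_subset (by simp [hab]), Finset.card_insert_of_notMem hx,
        Finset.card_insert_of_notMem hgxb, Finset.card_singleton, Nat.add_sub_cancel]
    · rw [Finset.smul_finset_sdiff, Finset.smul_finset_insert, Finset.smul_finset_insert,
        Finset.smul_finset_singleton, smul_smul_of_sq_eq_one hg, hb, ha, Finset.insert_comm]

theorem exists_card_eq_smul_eq (hg : g ^ 2 = 1) {a : α} (ha : g • a = a) {n : ℕ}
    (hn : n ≤ Fintype.card α) : ∃ b : Finset α, b.card = n ∧ g • b = b := by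
  induction n with
  | zero => exact ⟨∅, Finset.card_empty, Finset.smul_finset_empty g⟩
  | succ n ih =>
    obtain ⟨b, rfl, hb⟩ := ih (Nat.le_of_succ_le hn)
    exact exists_card_eq_succ_smul_eq hg ha hb hn

theorem exists_card_eq_disjoint_smul (hg : g ^ 2 = 1) (hfree : ∀ x : α, g • x ≠ x) {n : ℕ}
    (hn : 2 * n ≤ Fintype.card α) : ∃ s : Finset α, s.card = n ∧ Disjoint s (g • s) := by
  induction n with
  | zero => exact ⟨∅, Finset.card_empty, Finset.disjoint_empty_left _⟩
  | succ n ih =>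
    obtain ⟨s, rfl, hs⟩ := ih (by omega)
    have hcard : (s ∪ g • s).card < (Finset.univ : Finset α).card := by
      rw [Finset.card_union_of_disjoint hs, Finset.card_smul_finset, Finset.card_univ]
      omega
    obtain ⟨x, -, hx⟩ := Finset.exists_mem_notMem_of_card_lt_card hcard
    obtain ⟨hxs, hxgs⟩ := Finset.notMem_union.1 hx
    have hgxs : g • x ∉ s := by rwa [← mem_smul_finset_iff_of_sq_eq_one hg]
    refine ⟨insert x s, Finset.card_insert_of_notMem hxs, ?_⟩
    rw [Finset.smul_finset_insert, Finset.disjoint_insert_left, Finset.disjoint_insert_right,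
      Finset.mem_insert, not_or]
    exact ⟨⟨(hfree x).symm, hxgs⟩, hgxs, hs⟩

theorem exists_two_mul_card_eq_smul_eq_or_compl (hα : Even (Fintype.card α)) (hg : g ^ 2 = 1) :
    ∃ b : Finset α, 2 * b.card = Fintype.card α ∧ (g • b = b ∨ g • b = bᶜ) := by
  obtain ⟨n, hn⟩ := even_iff_exists_two_mul.1 hα
  by_cases hfixed : ∃ a : α, g • a = a
  · obtain ⟨a, ha⟩ := hfixed
    obtain ⟨b, rfl, hb⟩ := exists_card_eq_smul_eq (n := n) hg ha (by omega)
    exact ⟨b, hn.symm, Or.inl hb⟩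
  · push Not at hfixed
    obtain ⟨b, rfl, hb⟩ := exists_card_eq_disjoint_smul hg hfixed hn.ge
    refine ⟨b, hn.symm, Or.inr (Finset.eq_of_subset_of_card_le ?_ ?_)⟩
    · exact Finset.subset_compl_iff_disjoint_left.2 hb
    · rw [Finset.card_compl, Finset.card_smul_finset]
      omega

theorem smul_pair_compl_eq {b : Finset α} (hb : g • b = b ∨ g • b = bᶜ) :
    g • ({b, bᶜ} : Finset (Finset α)) = {b, bᶜ} := by
  rw [Finset.smul_finset_insert, Finset.smul_finset_singleton, smul_finset_compl]
  rcases hb with hb | hb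
  · rw [hb]
  · rw [hb, compl_compl, Finset.pair_comm]

end GroupAction

section Halving

variable {α : Type*} [Fintype α] [DecidableEq α]

/-- A partition of a finite type into two unordered blocks of equal size, the analogue of
`IsTriplePartition` on an arbitrary finite type. Disjointness of the blocks is implicit: they cover
the type and each contains half of its elements. -/
def IsHalving (q : Finset (Finset α)) : Prop :=
  q.card = 2 ∧ (∀ b ∈ q, 2 * b.card = Fintype.card α) ∧ q.sup id = Finset.univ

theorem isHalving_pair_compl [Nonempty α] {b : Finset α} (hb : 2 * b.card = Fintype.card α) :
    IsHalving {b, bᶜ} := by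
  have hbc : 2 * bᶜ.card = Fintype.card α := by
    rw [Finset.card_compl]
    omega
  refine ⟨Finset.card_pair ne_compl_self, ?_, ?_⟩
  · simp only [Finset.mem_insert, Finset.mem_singleton, forall_eq_or_imp, forall_eq]
    exact ⟨hb, hbc⟩
  · rw [Finset.sup_insert, Finset.sup_singleton, id, id, sup_compl_eq_top, Finset.top_eq_univ]

theorem isHalving_iff_isTriplePartition {q : Finset (Finset (Fin 6))} :
    IsHalving q ↔ IsTriplePartition q := by
  have hcard (b : Finset (Fin 6)) : 2 * b.card = Fintype.card (Fin 6) ↔ b.card = 3 := by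
    rw [Fintype.card_fin]
    omega
  simp only [IsHalving, IsTriplePartition, hcard]

theorem involution_fixes_a_triple_partition_general {G : Type*} [Group G] [MulAction G α]
    [Nonempty α] (hα : Even (Fintype.card α)) (g : G) (hg : g ^ 2 = 1) :
    ∃ q : Finset (Finset α), IsHalving q ∧ g • q = q := by
  obtain ⟨b, hcard, hb⟩ := exists_two_mul_card_eq_smul_eq_or_compl hα hg
  exact ⟨{b, bᶜ}, isHalving_pair_compl hcard, smul_pair_compl_eq hb⟩

end Halving

/-- Every element of order 2 (or 1) of S₆ fixes some partition of {1,...,6}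
into two triples. -/
theorem involution_fixes_a_triple_partition (g : Equiv.Perm (Fin 6)) (hg : g ^ 2 = 1) :
    ∃ q : Finset (Finset (Fin 6)), IsTriplePartition q ∧ g • q = q := by
  simpa only [isHalving_iff_isTriplePartition] using
    involution_fixes_a_triple_partition_general (α := Fin 6) (by decide) g hg
end

section
/- Let H ≤ S₆ be the image of an embedding S₅ ↪ S₆ that is not conjugate to the standard point-stabilizer embedding (i.e., H acts transitively on {1,...,6}). Then H acting on the 15-element set P of partitions of {1,...,6} into three pairs has exactly two orbits, of sizes 5 and 10. -/
open Pointwise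

/-- A partition of {1,...,6} into three (unordered) pairs. -/
def IsPairPartition (p : Finset (Finset (Fin 6))) : Prop :=
  p.card = 3 ∧ (∀ b ∈ p, b.card = 2) ∧ p.sup id = Finset.univ

/-!
Suppose that `|H|` is divisible by 15 but not by 9; for `S₅` it is 120. An element `c ∈ H` of order
5 has prime order greater than `6 / 2`, so the transitive group `H` is primitive. By Jordan's
theorem a 3-cycle in `H` would force `A₆ ≤ H`, hence `9 ∣ |H|`; so an element `d ∈ H` of order 3 has
cycle type `(3, 3)` and therefore fixes exactly three pair partitions, whereas `c` fixes none.

Consequently the `H`-orbits on the 15 pair partitions have size 5, 10 or 15. Orbit-stabilizer and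
`9 ∤ |H|` show that 3 does not divide the size of the orbit of a pair partition fixed by `d`, so
that orbit has size 5 or 10. An orbit of size 5 contains exactly two fixed points of `d`,
since their number is at most 3 and congruent to 5 modulo 3. The orbit of the third fixed point then
contains just one of them, so it has size 10. An orbit of size 10 leaves a complement of size 5,
which is a single orbit.
-/

open MulAction Equiv

section Actions

variable {G X : Type*} [Group G] [MulAction G X]

theorem isPreprimitive_of_card_lt_two_mul_ncard_orbit [Finite X] [IsPretransitive G X]
    {K : Subgroup G} {x : X} (hprime : (orbit K x).ncard.Prime)
    (hX : Nat.card X < 2 * (orbit K x).ncard) : IsPreprimitive G X := by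
  have : IsPreprimitive K (orbit K x) := .of_prime_card hprime
  let inclusion : orbit K x →ₑ[K.subtype] X :=
    { toFun := Subtype.val, map_smul' := fun _ _ ↦ rfl }
  refine IsPreprimitive.of_card_lt (f := inclusion) ?_
  rwa [show Set.range inclusion = orbit K x from Subtype.range_coe]

theorem ncard_orbit_zpowers_eq_orderOf {g : G} (hg : (orderOf g).Prime) {x : X} (hx : g • x ≠ x) :
    (orbit (Subgroup.zpowers g) x).ncard = orderOf g := by
  have hdvd : (orbit (Subgroup.zpowers g) x).ncard ∣ orderOf g := by
    rw [← index_stabilizer, ← Nat.card_zpowers]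
    exact Subgroup.index_dvd_card _
  refine ((Nat.dvd_prime hg).mp hdvd).resolve_left fun hone ↦ hx ?_
  obtain ⟨y, hy⟩ := Set.ncard_eq_one.mp hone
  have hxy : x ∈ ({y} : Set X) := hy ▸ mem_orbit_self x
  have hgxy : g • x ∈ ({y} : Set X) :=
    hy ▸ mem_orbit x (⟨g, Subgroup.mem_zpowers g⟩ : Subgroup.zpowers g)
  exact hgxy.trans hxy.symm

theorem isPreprimitive_of_card_lt_two_mul_orderOf [Finite X] [FaithfulSMul G X]
    [IsPretransitive G X] {g : G} (hg : (orderOf g).Prime) (hX : Nat.card X < 2 * orderOf g) :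
    IsPreprimitive G X := by
  obtain ⟨x, hx⟩ : ∃ x : X, g • x ≠ x := by
    by_contra! hfix
    exact hg.ne_one <| orderOf_eq_one_iff.mpr <|
      FaithfulSMul.eq_of_smul_eq_smul fun x : X ↦ by rw [hfix, one_smul]
  have horbit := ncard_orbit_zpowers_eq_orderOf hg hx
  exact isPreprimitive_of_card_lt_two_mul_ncard_orbit (horbit ▸ hg) (horbit ▸ hX)

theorem fixedPoints_zpowers (g : G) : fixedPoints (Subgroup.zpowers g) X = fixedBy X g := by
  ext x
  refine ⟨fun h ↦ h ⟨g, Subgroup.mem_zpowers g⟩, fun h k ↦ ?_⟩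
  have hle : Subgroup.zpowers g ≤ stabilizer G x := Subgroup.zpowers_le.mpr h
  exact hle k.2

theorem card_modEq_ncard_fixedBy [Finite X] {p : ℕ} [Fact p.Prime] {g : G}
    (hg : orderOf g = p) : Nat.card X ≡ (fixedBy X g).ncard [MOD p] := by
  have hgroup : IsPGroup p (Subgroup.zpowers g) :=
    .of_card (n := 1) (by rw [Nat.card_zpowers, hg, pow_one])
  rw [← fixedPoints_zpowers]
  exact hgroup.card_modEq_card_fixedPoints X

theorem ncard_orbit_modEq_ncard_orbit_inter_fixedBy [Finite X] {p : ℕ} [Fact p.Prime] {g : G}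
    (hg : orderOf g = p) (x : X) :
    (orbit G x).ncard ≡ (orbit G x ∩ fixedBy X g).ncard [MOD p] := by
  have himage : Subtype.val '' fixedBy (orbit G x) g = orbit G x ∩ fixedBy X g := by
    ext y
    constructor
    · rintro ⟨z, hz, rfl⟩
      exact ⟨z.2, congrArg Subtype.val hz⟩
    · rintro ⟨hy, hfix⟩
      exact ⟨⟨y, hy⟩, Subtype.ext hfix, rfl⟩
  rw [← himage, Set.ncard_image_of_injective _ Subtype.val_injective]
  exact card_modEq_ncard_fixedBy hg

theorem dvd_ncard_orbit_of_fixedBy_eq_empty [Finite X] {p : ℕ} [Fact p.Prime] {g : G}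
    (hg : orderOf g = p) (hfix : fixedBy X g = ∅) (x : X) : p ∣ (orbit G x).ncard := by
  have h := ncard_orbit_modEq_ncard_orbit_inter_fixedBy hg x
  rw [hfix, Set.inter_empty, Set.ncard_empty] at h
  exact Nat.modEq_zero_iff_dvd.mp h

theorem ncard_orbit_mul_orderOf_dvd_card {g : G} {x : X} (hx : x ∈ fixedBy X g) :
    (orbit G x).ncard * orderOf g ∣ Nat.card G := by
  rw [← index_stabilizer, ← (stabilizer G x).index_mul_card]
  exact mul_dvd_mul_left _ (Subgroup.orderOf_dvd_natCard _ hx)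

theorem ncard_fixedBy_eq_of_isConj {g h : G} (hgh : IsConj g h) :
    (fixedBy X g).ncard = (fixedBy X h).ncard := by
  obtain ⟨k, rfl⟩ := isConj_iff.mp hgh
  rw [← smul_fixedBy, Set.ncard_smul_set]

theorem exists_orbit_eq_compl_orbit [Finite X] {y : X} (hne : (orbit G y)ᶜ.Nonempty)
    (hdvd : ∀ x : X, (orbit G y)ᶜ.ncard ∣ (orbit G x).ncard) :
    ∃ x : X, orbit G x = (orbit G y)ᶜ := by
  obtain ⟨x, hx⟩ := hne
  have hdisjoint : Disjoint (orbit G x) (orbit G y) :=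
    orbit.eq_or_disjoint x y |>.resolve_left fun h ↦ hx (h ▸ mem_orbit_self x)
  have hpos : 0 < (orbit G x).ncard := (Set.ncard_pos).mpr (nonempty_orbit x)
  exact ⟨x, Set.eq_of_subset_of_ncard_le hdisjoint.subset_compl_right
    (Nat.le_of_dvd hpos (hdvd x))⟩

theorem exists_orbit_ncard_eq_ten (hX : Nat.card X = 15)
    (hfive : ∀ x : X, 5 ∣ (orbit G x).ncard) {d : G} (hd : orderOf d = 3)
    (hdX : (fixedBy X d).ncard = 3) (hG : ¬ 9 ∣ Nat.card G) :
    ∃ x : X, (orbit G x).ncard = 10 := by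
  have : Finite X := Nat.finite_of_card_ne_zero (by omega)
  by_contra! hten
  have horbit {x : X} (hx : x ∈ fixedBy X d) : (orbit G x).ncard = 5 := by
    have hpos : 0 < (orbit G x).ncard := (Set.ncard_pos).mpr (nonempty_orbit x)
    have hle : (orbit G x).ncard ≤ 15 := hX ▸ Set.ncard_le_card _
    have hthree : ¬ 3 ∣ (orbit G x).ncard := fun h ↦
      hG ((mul_dvd_mul h hd.symm.dvd).trans (ncard_orbit_mul_orderOf_dvd_card hx))
    have := hfive x
    have := hten x
    omega
  have hfixed {x : X} (hx : x ∈ fixedBy X d) : (orbit G x ∩ fixedBy X d).ncard = 2 := by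
    have hmod := ncard_orbit_modEq_ncard_orbit_inter_fixedBy hd x
    have hle : (orbit G x ∩ fixedBy X d).ncard ≤ 3 :=
      hdX ▸ Set.ncard_le_ncard Set.inter_subset_right
    rw [horbit hx, Nat.ModEq] at hmod
    omega
  obtain ⟨x, hx⟩ : (fixedBy X d).Nonempty := Set.nonempty_of_ncard_ne_zero (by omega)
  obtain ⟨y, hy, hyx⟩ : ∃ y ∈ fixedBy X d, y ∉ orbit G x ∩ fixedBy X d :=
    Set.exists_mem_notMem_of_ncard_lt_ncard (by rw [hfixed hx, hdX]; norm_num)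
  have hdisjoint : Disjoint (orbit G x) (orbit G y) :=
    orbit.eq_or_disjoint x y |>.resolve_left fun h ↦ hyx ⟨h ▸ mem_orbit_self y, hy⟩
  have hsum : (orbit G x ∩ fixedBy X d).ncard + (orbit G y ∩ fixedBy X d).ncard ≤ 3 := by
    rw [← Set.ncard_union_eq (hdisjoint.mono Set.inter_subset_left Set.inter_subset_left), ← hdX]
    exact Set.ncard_le_ncard (Set.union_subset Set.inter_subset_right Set.inter_subset_right)
  have := hfixed hx
  have := hfixed hy
  omega

theorem exists_orbits_ncard_eq_five_ten (hX : Nat.card X = 15) {c d : G}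
    (hc : orderOf c = 5) (hd : orderOf d = 3) (hcX : fixedBy X c = ∅)
    (hdX : (fixedBy X d).ncard = 3) (hG : ¬ 9 ∣ Nat.card G) :
    ∃ x y : X, (orbit G x).ncard = 5 ∧ (orbit G y).ncard = 10 ∧
      ∀ z : X, z ∈ orbit G x ∨ z ∈ orbit G y := by
  have : Finite X := Nat.finite_of_card_ne_zero (by omega)
  have : Fact (Nat.Prime 5) := ⟨Nat.prime_five⟩
  have hfive := dvd_ncard_orbit_of_fixedBy_eq_empty hc hcX
  obtain ⟨y, hy⟩ := exists_orbit_ncard_eq_ten hX hfive hd hdX hG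
  have hcompl : (orbit G y)ᶜ.ncard = 5 := by rw [Set.ncard_compl, hX, hy]
  obtain ⟨x, hx⟩ := exists_orbit_eq_compl_orbit
    (Set.nonempty_of_ncard_ne_zero (by omega)) (hcompl ▸ hfive)
  exact ⟨x, y, hx ▸ hcompl, hy, fun z ↦ hx ▸ (em (z ∈ orbit G y)).symm⟩

end Actions

section Permutations

variable {α : Type*} [Fintype α] [DecidableEq α]

theorem cycleType_eq_singleton_of_card_lt_two_mul_orderOf {g : Perm α} (hg : (orderOf g).Prime)
    (hα : Fintype.card α < 2 * orderOf g) : g.cycleType = {orderOf g} := by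
  have hcycle : g.IsCycle := Perm.isCycle_of_prime_order' hg hα
  rw [hcycle.cycleType, ← hcycle.orderOf]

theorem isThreeCycle_or_cycleType_eq_of_orderOf_eq_three (hα : Fintype.card α < 9) {g : Perm α}
    (hg : orderOf g = 3) : g.IsThreeCycle ∨ g.cycleType = {3, 3} := by
  obtain ⟨n, hn⟩ := Perm.cycleType_prime_order (hg ▸ Nat.prime_three)
  have hle := g.sum_cycleType_le
  rw [hg] at hn
  rw [hn, Multiset.sum_replicate, smul_eq_mul] at hle
  obtain rfl | rfl : n = 0 ∨ n = 1 := by omega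
  exacts [.inl hn, .inr hn]

theorem factorial_card_div_two_dvd_card_of_isThreeCycle_mem {H : Subgroup (Perm α)}
    (hH : IsPreprimitive H α) {g : Perm α} (hg : g.IsThreeCycle) (hgH : g ∈ H) :
    (Nat.card α).factorial / 2 ∣ Nat.card H := by
  obtain ⟨x, hx, -⟩ := hg.isCycle
  have : Nontrivial α := nontrivial_of_ne _ _ hx
  rw [← nat_card_alternatingGroup]
  exact Subgroup.card_dvd_of_le
    (Perm.alternatingGroup_le_of_isPreprimitive_of_isThreeCycle_mem hH hg hgH)

end Permutations

section PairPartitions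

theorem IsPairPartition.smul {p : Finset (Finset (Fin 6))} (hp : IsPairPartition p)
    (g : Perm (Fin 6)) : IsPairPartition (g • p) := by
  obtain ⟨hcard, hblocks, hcover⟩ := hp
  refine ⟨by rw [Finset.card_smul_finset, hcard], ?_, ?_⟩
  · intro b hb
    obtain ⟨a, ha, rfl⟩ := Finset.mem_smul_finset.mp hb
    rw [Finset.card_smul_finset, hblocks a ha]
  · refine Finset.eq_univ_iff_forall.mpr fun x ↦ ?_
    have hx : g⁻¹ • x ∈ p.sup id := hcover ▸ Finset.mem_univ _
    obtain ⟨b, hb, hxb⟩ := Finset.mem_sup.mp hx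
    exact Finset.mem_sup.mpr
      ⟨g • b, Finset.smul_mem_smul_finset hb, Finset.inv_smul_mem_iff.mp hxb⟩

/-- The set of partitions of six points into three pairs, as a set stable under `S₆`, so that every
subgroup of `S₆` acts on it. -/
def pairPartitions : SubMulAction (Perm (Fin 6)) (Finset (Finset (Fin 6))) where
  carrier := {p | IsPairPartition p}
  smul_mem' g _ hp := hp.smul g

/-- Enumerates `pairPartitions` through the `15.choose 3` triples of pairs: the ambient type has
`2 ^ 64` elements, so filtering all of it would not compute. -/
instance : Fintype pairPartitions :=
  Fintype.subtype {p ∈ (Finset.univ.powersetCard 2).powersetCard 3 | p.sup id = Finset.univ}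
    fun p ↦ by
      change _ ↔ IsPairPartition p
      simp only [IsPairPartition, Finset.mem_filter, Finset.mem_powersetCard, Finset.subset_iff,
        Finset.mem_univ, implies_true, true_and]
      tauto

theorem card_pairPartitions : Nat.card pairPartitions = 15 := by
  rw [Nat.card_eq_fintype_card]
  decide +kernel

theorem fixedBy_pairPartitions_eq_empty {g : Perm (Fin 6)} (hg : orderOf g = 5) :
    fixedBy pairPartitions g = ∅ := by
  have hconj : IsConj g c[0, 1, 2, 3, 4] := by
    rw [Perm.isConj_iff_cycleType_eq, cycleType_eq_singleton_of_card_lt_two_mul_orderOf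
      (hg ▸ Nat.prime_five) (by simp [hg]), hg]
    decide +kernel
  rw [← Set.ncard_eq_zero, ncard_fixedBy_eq_of_isConj hconj, Set.ncard_eq_toFinset_card']
  decide +kernel

theorem ncard_fixedBy_pairPartitions_eq_three {g : Perm (Fin 6)} (hg : g.cycleType = {3, 3}) :
    (fixedBy pairPartitions g).ncard = 3 := by
  have hconj : IsConj g (c[0, 1, 2] * c[3, 4, 5]) := by
    rw [Perm.isConj_iff_cycleType_eq, hg]
    decide +kernel
  rw [ncard_fixedBy_eq_of_isConj hconj, Set.ncard_eq_toFinset_card']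
  decide +kernel

theorem ncard_setOf_isPairPartition_smul_eq (H : Subgroup (Perm (Fin 6))) (x : pairPartitions) :
    {p : Finset (Finset (Fin 6)) | IsPairPartition p ∧
      ∃ h ∈ H, h • (x : Finset (Finset (Fin 6))) = p}.ncard = (orbit H x).ncard := by
  rw [← Set.ncard_image_of_injective _ Subtype.val_injective]
  congr 1
  ext p
  constructor
  · rintro ⟨-, h, hh, rfl⟩
    exact ⟨_, mem_orbit x (⟨h, hh⟩ : H), rfl⟩
  · rintro ⟨_, ⟨h, rfl⟩, rfl⟩
    exact ⟨(h • x).2, h, h.2, rfl⟩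

theorem exists_orbits_pairPartitions {H : Subgroup (Perm (Fin 6))} [IsPretransitive H (Fin 6)]
    (h15 : 15 ∣ Nat.card H) (h9 : ¬ 9 ∣ Nat.card H) :
    ∃ x y : pairPartitions, (orbit H x).ncard = 5 ∧ (orbit H y).ncard = 10 ∧
      ∀ z : pairPartitions, z ∈ orbit H x ∨ z ∈ orbit H y := by
  have : Fact (Nat.Prime 5) := ⟨Nat.prime_five⟩
  obtain ⟨c, hc⟩ := exists_prime_orderOf_dvd_card' (G := H) 5 (dvd_trans (by norm_num) h15)
  obtain ⟨d, hd⟩ := exists_prime_orderOf_dvd_card' (G := H) 3 (dvd_trans (by norm_num) h15)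
  have hprim : IsPreprimitive H (Fin 6) :=
    isPreprimitive_of_card_lt_two_mul_orderOf (hc ▸ Nat.prime_five) (by simp [hc])
  have hd_not_isThreeCycle : ¬ (d : Perm (Fin 6)).IsThreeCycle := fun h ↦ by
    have hdvd := factorial_card_div_two_dvd_card_of_isThreeCycle_mem hprim h d.2
    rw [Nat.card_fin] at hdvd
    exact h9 ((show 9 ∣ Nat.factorial 6 / 2 by decide).trans hdvd)
  have hd_cycleType : (d : Perm (Fin 6)).cycleType = {3, 3} :=
    isThreeCycle_or_cycleType_eq_of_orderOf_eq_three (by simp) ((Subgroup.orderOf_coe d).trans hd)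
      |>.resolve_left hd_not_isThreeCycle
  exact exists_orbits_ncard_eq_five_ten card_pairPartitions hc hd
    (fixedBy_pairPartitions_eq_empty ((Subgroup.orderOf_coe c).trans hc))
    (ncard_fixedBy_pairPartitions_eq_three hd_cycleType) h9

theorem nonstandard_S5_orbits_on_pair_partitions_general (H : Subgroup (Perm (Fin 6)))
    (h15 : 15 ∣ Nat.card H) (h9 : ¬ 9 ∣ Nat.card H)
    (htrans : ∀ a b : Fin 6, ∃ h ∈ H, h a = b) :
    ∃ p₁ p₂ : Finset (Finset (Fin 6)), IsPairPartition p₁ ∧ IsPairPartition p₂ ∧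
      {p : Finset (Finset (Fin 6)) | IsPairPartition p ∧ ∃ h ∈ H, h • p₁ = p}.ncard = 5 ∧
      {p : Finset (Finset (Fin 6)) | IsPairPartition p ∧ ∃ h ∈ H, h • p₂ = p}.ncard = 10 ∧
      ∀ p : Finset (Finset (Fin 6)), IsPairPartition p →
        (∃ h ∈ H, h • p₁ = p) ∨ (∃ h ∈ H, h • p₂ = p) := by
  have : IsPretransitive H (Fin 6) :=
    ⟨fun a b ↦ let ⟨h, hh, hab⟩ := htrans a b; ⟨⟨h, hh⟩, hab⟩⟩
  obtain ⟨x, y, hx, hy, hcover⟩ := exists_orbits_pairPartitions h15 h9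
  have exists_smul_eq_of_mem_orbit {z w : pairPartitions} (hz : z ∈ orbit H w) :
      ∃ h ∈ H, h • (w : Finset (Finset (Fin 6))) = z :=
    let ⟨h, hh⟩ := hz
    ⟨h, h.2, congrArg Subtype.val hh⟩
  exact ⟨x, y, x.2, y.2, (ncard_setOf_isPairPartition_smul_eq H x).trans hx,
    (ncard_setOf_isPairPartition_smul_eq H y).trans hy, fun p hp ↦
      (hcover ⟨p, hp⟩).imp exists_smul_eq_of_mem_orbit exists_smul_eq_of_mem_orbit⟩

end PairPartitions

/-- A non-standard (i.e. transitive) subgroup S₅ ≤ S₆ acts on the 15 partitions of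
{1,...,6} into three pairs with exactly two orbits, of sizes 5 and 10. -/
theorem nonstandard_S5_orbits_on_pair_partitions (H : Subgroup (Equiv.Perm (Fin 6)))
    (hiso : Nonempty (H ≃* Equiv.Perm (Fin 5)))
    (htrans : ∀ a b : Fin 6, ∃ h ∈ H, h a = b) :
    ∃ p₁ p₂ : Finset (Finset (Fin 6)), IsPairPartition p₁ ∧ IsPairPartition p₂ ∧
      {p : Finset (Finset (Fin 6)) | IsPairPartition p ∧ ∃ h ∈ H, h • p₁ = p}.ncard = 5 ∧
      {p : Finset (Finset (Fin 6)) | IsPairPartition p ∧ ∃ h ∈ H, h • p₂ = p}.ncard = 10 ∧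
      ∀ p : Finset (Finset (Fin 6)), IsPairPartition p →
        (∃ h ∈ H, h • p₁ = p) ∨ (∃ h ∈ H, h • p₂ = p) := by
  obtain ⟨e⟩ := hiso
  have hcard : Nat.card H = 120 := by
    rw [Nat.card_congr e.toEquiv, Nat.card_perm, Nat.card_fin]
    rfl
  exact nonstandard_S5_orbits_on_pair_partitions_general H (by omega) (by omega) htrans
end
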